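/- Fix strikes 0 < K_1 < K_2 < … < K_N and a barrier U > 0 with U ≠ K_j for all j, and let a_j, b_j : (0,∞) → (0,∞), j = 1,…,N, be functions each admitting a finite strictly positive limit as τ → 0+. Then: (1) there exist σ*₁, σ*₂ > 0 and T > 0 such that for all τ ∈ (0,T], all i with K_i < U, all j with K_j > U, and all s, s' > 0: C^bs(U,K_i,τ,s) = C^{σ*}(U,K_i,τ) implies s ≤ a_i(τ), and C^bs(U,K_j,τ,s') = C^{σ*}(U,K_j,τ) implies s' ≥ b_j(τ) (existence of an upper dominating PCLVG surface); and (2) there exist σ_{*1}, σ_{*2} > 0 and T > 0 such that for all τ ∈ (0,T], all i with K_i < U, all j with K_j > U, and all s, s' > 0: C^bs(U,K_i,τ,s) = C^{σ_*}(U,K_i,τ) implies s ≥ b_i(τ), and C^bs(U,K_j,τ,s') = C^{σ_*}(U,K_j,τ) implies s' ≤ a_j(τ) (existence of a lower dominating PCLVG surface). -/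

import Mathlib

open MeasureTheory Filter Set

/-- Standard normal cumulative distribution function. -/
noncomputable def stdNormalCDF (x : ℝ) : ℝ :=
  (Real.sqrt (2 * Real.pi))⁻¹ * ∫ y in Set.Iic x, Real.exp (-(y ^ 2) / 2)

/-- Black–Scholes call price with zero interest and dividend rates. -/
noncomputable def bsCall (S K τ σ : ℝ) : ℝ :=
  let d1 := (Real.log (S / K) + σ ^ 2 * τ / 2) / (σ * Real.sqrt τ)
  S * stdNormalCDF d1 - K * stdNormalCDF (d1 - σ * Real.sqrt τ)

/-- Black–Scholes put price with zero interest and dividend rates. -/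
noncomputable def bsPut (S K τ σ : ℝ) : ℝ := bsCall S K τ σ - S + K

/-- The denominator appearing in the PCLVG call price formula. -/
noncomputable def pclvgD (σ1 σ2 U τ : ℝ) : ℝ :=
  1 / σ1 + 1 / σ2 - (1 / σ2 - 1 / σ1) * Real.exp (-2 * U / (σ1 * τ))

/-- The explicit PCLVG call price `C^σ(U,K,τ)`. -/
noncomputable def pclvgCall (σ1 σ2 U K τ : ℝ) : ℝ :=
  if K < U then
    (U - K) +
      τ * Real.exp (-(U - K) / (σ1 * τ)) * (1 - Real.exp (-2 * K / (σ1 * τ))) /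
        pclvgD σ1 σ2 U τ
  else
    τ * Real.exp (-(K - U) / (σ2 * τ)) * (1 - Real.exp (-2 * U / (σ1 * τ))) /
      pclvgD σ1 σ2 U τ

/-- The PCLVG put price `P^σ(U,K,τ) = C^σ(U,K,τ) − (U − K)`. -/
noncomputable def pclvgPut (σ1 σ2 U K τ : ℝ) : ℝ := pclvgCall σ1 σ2 U K τ - (U - K)

/-!
Everything is decided on the exponential scale: `f` has decay rate `r` if `τ log f(τ) → -r` as
`τ → 0+`. An out-of-the-money Black–Scholes price with strike `K`, spot `S` and volatility `α` has
rate `log(S/K)² / (2α²)`, whereas an out-of-the-money PCLVG price has rate `|K - U| / σ₁` or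
`|K - U| / σ₂` according to the side of the barrier. A larger rate means a smaller price, and
Black–Scholes prices increase with the volatility, so a small `σ₁` pushes the implied volatilities
of all strikes below `U` under any prescribed positive level, and a large `σ₁` pushes them over it;
`σ₂` plays the same role, independently, for the strikes above `U`. In-the-money calls are reduced
to out-of-the-money ones by put-call symmetry.
-/

section

open Real ProbabilityTheory Topology

/-- Exponential decay at small times: `τ log f(τ) → -r` as `τ → 0+`, i.e. `f(τ)` is `exp(-r/τ)` up
to subexponential factors. Eventual positivity is included because `Real.log` only sees `|f|`. -/
structure HasExpDecayRate (f : ℝ → ℝ) (r : ℝ) : Prop where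
  eventually_pos : ∀ᶠ τ in 𝓝[>] 0, 0 < f τ
  tendsto_mul_log : Tendsto (fun τ ↦ τ * log (f τ)) (𝓝[>] 0) (𝓝 (-r))

namespace HasExpDecayRate

variable {f g h : ℝ → ℝ} {r q : ℝ}

theorem id : HasExpDecayRate (fun τ ↦ τ) 0 where
  eventually_pos := self_mem_nhdsWithin
  tendsto_mul_log := by
    simpa using (continuous_mul_log.tendsto 0).mono_left nhdsWithin_le_nhds

theorem of_tendsto_pos {L : ℝ} (hL : 0 < L) (hf : Tendsto f (𝓝[>] 0) (𝓝 L)) :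
    HasExpDecayRate f 0 where
  eventually_pos := hf.eventually_const_lt hL
  tendsto_mul_log := by
    have hid : Tendsto (fun τ : ℝ ↦ τ) (𝓝[>] 0) (𝓝 0) := nhdsWithin_le_nhds
    simpa using hid.mul (hf.log hL.ne')

theorem const {c : ℝ} (hc : 0 < c) : HasExpDecayRate (fun _ ↦ c) 0 :=
  of_tendsto_pos hc tendsto_const_nhds

theorem exp_neg_div (hf : Tendsto f (𝓝[>] 0) (𝓝 r)) :
    HasExpDecayRate (fun τ ↦ exp (-f τ / τ)) r where
  eventually_pos := .of_forall fun _ ↦ exp_pos _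
  tendsto_mul_log := by
    refine hf.neg.congr' ?_
    filter_upwards [self_mem_nhdsWithin] with τ hτ
    rw [log_exp, mul_div_cancel₀ _ (ne_of_gt hτ)]

theorem mul (hf : HasExpDecayRate f r) (hg : HasExpDecayRate g q) :
    HasExpDecayRate (fun τ ↦ f τ * g τ) (r + q) where
  eventually_pos := by
    filter_upwards [hf.eventually_pos, hg.eventually_pos] with τ hfτ hgτ using mul_pos hfτ hgτ
  tendsto_mul_log := by
    rw [neg_add]
    refine (hf.tendsto_mul_log.add hg.tendsto_mul_log).congr' ?_
    filter_upwards [hf.eventually_pos, hg.eventually_pos] with τ hfτ hgτ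
    rw [log_mul hfτ.ne' hgτ.ne', mul_add]

theorem sqrt (hf : HasExpDecayRate f r) : HasExpDecayRate (fun τ ↦ √(f τ)) (r / 2) where
  eventually_pos := hf.eventually_pos.mono fun _ ↦ sqrt_pos.2
  tendsto_mul_log := by
    rw [← neg_div]
    refine (hf.tendsto_mul_log.div_const 2).congr' ?_
    filter_upwards [hf.eventually_pos] with τ hτ
    rw [log_sqrt hτ.le, mul_div_assoc]

theorem congr' (hf : HasExpDecayRate f r) (hfg : f =ᶠ[𝓝[>] 0] g) : HasExpDecayRate g r where
  eventually_pos := by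
    filter_upwards [hf.eventually_pos, hfg] with τ hτ heq using heq ▸ hτ
  tendsto_mul_log := hf.tendsto_mul_log.congr' <| by
    filter_upwards [hfg] with τ heq using by rw [heq]

theorem squeeze (hf : HasExpDecayRate f r) (hh : HasExpDecayRate h r)
    (hfg : ∀ᶠ τ in 𝓝[>] 0, f τ ≤ g τ) (hgh : ∀ᶠ τ in 𝓝[>] 0, g τ ≤ h τ) :
    HasExpDecayRate g r where
  eventually_pos := by
    filter_upwards [hf.eventually_pos, hfg] with τ hτ hle using hτ.trans_le hle
  tendsto_mul_log := by
    refine tendsto_of_tendsto_of_tendsto_of_le_of_le' hf.tendsto_mul_log hh.tendsto_mul_log ?_ ?_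
    · filter_upwards [self_mem_nhdsWithin, hf.eventually_pos, hfg] with τ hτ hfτ hle
      exact mul_le_mul_of_nonneg_left (log_le_log hfτ hle) (le_of_lt hτ)
    · filter_upwards [self_mem_nhdsWithin, hf.eventually_pos, hfg, hgh] with τ hτ hfτ hle hle'
      exact mul_le_mul_of_nonneg_left (log_le_log (hfτ.trans_le hle) hle') (le_of_lt hτ)

theorem eventually_lt (hf : HasExpDecayRate f r) (hg : HasExpDecayRate g q) (hrq : r < q) :
    ∀ᶠ τ in 𝓝[>] 0, g τ < f τ := by
  filter_upwards [self_mem_nhdsWithin, hf.eventually_pos, hg.eventually_pos,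
    hg.tendsto_mul_log.eventually_lt hf.tendsto_mul_log (neg_lt_neg hrq)] with τ hτ hfτ hgτ hlt
  exact (log_lt_log_iff hgτ hfτ).1 (lt_of_mul_lt_mul_left hlt (le_of_lt hτ))

end HasExpDecayRate

theorem stdNormalCDF_eq_integral (x : ℝ) :
    stdNormalCDF x = ∫ y in Iic x, gaussianPDFReal 0 1 y := by
  simp [stdNormalCDF, gaussianPDFReal, integral_const_mul]

theorem stdNormalCDF_eq_cdf : stdNormalCDF = cdf (gaussianReal 0 1) := by
  funext x
  rw [cdf_eq_real, measureReal_def, gaussianReal_apply_eq_integral 0 one_ne_zero,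
    ENNReal.toReal_ofReal (integral_nonneg (gaussianPDFReal_nonneg 0 1)), stdNormalCDF_eq_integral]

theorem stdNormalCDF_nonneg (x : ℝ) : 0 ≤ stdNormalCDF x :=
  stdNormalCDF_eq_cdf ▸ cdf_nonneg _ x

theorem tendsto_stdNormalCDF_atBot : Tendsto stdNormalCDF atBot (𝓝 0) :=
  stdNormalCDF_eq_cdf ▸ tendsto_cdf_atBot _

theorem stdNormalCDF_neg (x : ℝ) : stdNormalCDF (-x) = 1 - stdNormalCDF x := by
  have hreflect :
      ∫ y in Iic (-x), gaussianPDFReal 0 1 y = ∫ y in Ioi x, gaussianPDFReal 0 1 y := by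
    simpa [gaussianPDFReal] using integral_comp_neg_Iic (-x) (gaussianPDFReal 0 1)
  have hsplit := integral_add_compl (measurableSet_Iic (a := x)) (integrable_gaussianPDFReal 0 1)
  rw [integral_gaussianPDFReal_eq_one 0 one_ne_zero, compl_Iic] at hsplit
  rw [stdNormalCDF_eq_integral, stdNormalCDF_eq_integral, hreflect]
  linarith

theorem hasDerivAt_stdNormalCDF (x : ℝ) :
    HasDerivAt stdNormalCDF (gaussianPDFReal 0 1 x) x := by
  have hcont : Continuous (gaussianPDFReal 0 1) := by
    unfold gaussianPDFReal
    fun_prop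
  have hint := integrable_gaussianPDFReal 0 1
  have hsplit : stdNormalCDF = fun u ↦
      stdNormalCDF 0 + ∫ y in (0 : ℝ)..u, gaussianPDFReal 0 1 y := by
    funext u
    rw [← intervalIntegral.integral_Iic_sub_Iic hint.integrableOn hint.integrableOn,
      stdNormalCDF_eq_integral, stdNormalCDF_eq_integral, add_sub_cancel]
  rw [hsplit]
  exact (intervalIntegral.integral_hasDerivAt_right (hcont.intervalIntegrable _ _)
    (hcont.stronglyMeasurableAtFilter _ _) hcont.continuousAt).const_add _

theorem stdNormalCDF_le_exp {t : ℝ} (ht : t ≤ 0) (x : ℝ) :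
    stdNormalCDF x ≤ exp (-t * x + t ^ 2 / 2) := by
  have hchernoff := measure_le_le_exp_mul_mgf (μ := gaussianReal 0 1) (X := _root_.id) x ht
    (integrable_exp_mul_gaussianReal t)
  rw [mgf_id_gaussianReal, ← exp_add] at hchernoff
  rw [stdNormalCDF_eq_cdf, cdf_eq_real]
  simpa [Iic] using hchernoff

/-- The Black–Scholes call price as a function of the total volatility `v = σ √τ`, the only way in
which it depends on `σ` and `τ`. -/
noncomputable def bsCallTotalVol (S K v : ℝ) : ℝ :=
  S * stdNormalCDF (log (S / K) / v + v / 2) - K * stdNormalCDF (log (S / K) / v - v / 2)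

/-- The Black–Scholes vega, i.e. the derivative of `bsCallTotalVol S K` in the total volatility. It
is written in the form that is visibly symmetric in `S` and `K`, in place of `S φ(d₁)`. -/
noncomputable def bsVega (S K v : ℝ) : ℝ :=
  √(S * K) / √(2 * π) * exp (-(log (S / K) ^ 2 / (2 * v ^ 2)) - v ^ 2 / 8)

variable {S K U τ v w α : ℝ}

theorem log_div_swap (S K : ℝ) : log (K / S) = -log (S / K) := by
  rw [← log_inv, inv_div]

theorem bsCall_eq_bsCallTotalVol (hτ : 0 ≤ τ) (S K σ : ℝ) :
    bsCall S K τ σ = bsCallTotalVol S K (σ * √τ) := by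
  have hd₁ : (log (S / K) + σ ^ 2 * τ / 2) / (σ * √τ) =
      log (S / K) / (σ * √τ) + σ * √τ / 2 := by
    rw [show σ ^ 2 * τ = (σ * √τ) ^ 2 by rw [mul_pow, sq_sqrt hτ]]
    generalize σ * √τ = v
    rcases eq_or_ne v 0 with rfl | hv
    · simp
    · field_simp
  simp only [bsCall, bsCallTotalVol, hd₁]
  ring_nf

theorem bsCallTotalVol_swap (S K v : ℝ) :
    bsCallTotalVol S K v = S - K + bsCallTotalVol K S v := by
  unfold bsCallTotalVol
  rw [log_div_swap S K, show -log (S / K) / v + v / 2 = -(log (S / K) / v - v / 2) by ring,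
    show -log (S / K) / v - v / 2 = -(log (S / K) / v + v / 2) by ring, stdNormalCDF_neg,
    stdNormalCDF_neg]
  ring

theorem bsPut_eq_bsCall_swap (hτ : 0 ≤ τ) (S K σ : ℝ) : bsPut S K τ σ = bsCall K S τ σ := by
  rw [bsPut, bsCall_eq_bsCallTotalVol hτ, bsCall_eq_bsCallTotalVol hτ, bsCallTotalVol_swap]
  ring

theorem bsVega_pos (hS : 0 < S) (hK : 0 < K) (v : ℝ) : 0 < bsVega S K v := by
  unfold bsVega
  positivity

theorem bsVega_swap (S K v : ℝ) : bsVega K S v = bsVega S K v := by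
  rw [bsVega, bsVega, mul_comm K S, log_div_swap S K, neg_sq]

theorem mul_exp_neg_half_log_div (hS : 0 < S) (hK : 0 < K) :
    S * exp (-(log (S / K) / 2)) = √(S * K) := by
  have hSK : S * K = S ^ 2 * (K / S) := by field_simp
  rw [← neg_div, ← log_div_swap S K, exp_half, exp_log (div_pos hK hS), hSK,
    sqrt_mul (sq_nonneg S), sqrt_sq hS.le]

theorem mul_gaussianPDFReal_eq_bsVega (hS : 0 < S) (hK : 0 < K) (hv : v ≠ 0) :
    S * gaussianPDFReal 0 1 (log (S / K) / v + v / 2) = bsVega S K v := by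
  simp only [gaussianPDFReal, bsVega, ← mul_exp_neg_half_log_div hS hK, NNReal.coe_one, mul_one,
    sub_zero]
  rw [div_mul_eq_mul_div, mul_assoc S (exp _), ← exp_add, mul_left_comm, inv_mul_eq_div]
  congr 3
  field_simp
  ring

theorem hasDerivAt_bsCallTotalVol (hS : 0 < S) (hK : 0 < K) (hv : v ≠ 0) :
    HasDerivAt (bsCallTotalVol S K) (bsVega S K v) v := by
  have hlog : HasDerivAt (fun u ↦ log (S / K) / u) (-log (S / K) / v ^ 2) v := by
    simpa using (hasDerivAt_const v (log (S / K))).fun_div (hasDerivAt_id' v) hv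
  have hhalf : HasDerivAt (fun u : ℝ ↦ u / 2) (1 / 2) v := (hasDerivAt_id' v).div_const 2
  have hd₁ := ((hasDerivAt_stdNormalCDF _).comp v (hlog.add hhalf)).const_mul S
  have hd₂ := ((hasDerivAt_stdNormalCDF _).comp v (hlog.sub hhalf)).const_mul K
  have hvega₂ : K * gaussianPDFReal 0 1 (log (S / K) / v - v / 2) = bsVega S K v := by
    rw [← bsVega_swap, ← mul_gaussianPDFReal_eq_bsVega hK hS hv, log_div_swap S K,
      show -log (S / K) / v + v / 2 = -(log (S / K) / v - v / 2) by ring]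
    simp only [gaussianPDFReal, sub_zero, neg_sq]
  refine (hd₁.sub hd₂).congr_deriv ?_
  rw [← mul_assoc, ← mul_assoc]
  simp only [Pi.add_apply, Pi.sub_apply]
  rw [mul_gaussianPDFReal_eq_bsVega hS hK hv, hvega₂]
  ring

theorem strictMonoOn_bsCallTotalVol (hS : 0 < S) (hK : 0 < K) :
    StrictMonoOn (bsCallTotalVol S K) (Ioi 0) := by
  refine strictMonoOn_of_deriv_pos (convex_Ioi 0) (fun v hv ↦ ?_) fun v hv ↦ ?_
  · exact (hasDerivAt_bsCallTotalVol hS hK (ne_of_gt hv)).continuousAt.continuousWithinAt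
  · rw [interior_Ioi] at hv
    rw [(hasDerivAt_bsCallTotalVol hS hK (ne_of_gt hv)).deriv]
    exact bsVega_pos hS hK v

theorem strictMonoOn_bsCall (hS : 0 < S) (hK : 0 < K) (hτ : 0 < τ) :
    StrictMonoOn (bsCall S K τ) (Ioi 0) := by
  intro s hs t ht hst
  have hr := sqrt_pos.2 hτ
  rw [bsCall_eq_bsCallTotalVol hτ.le, bsCall_eq_bsCallTotalVol hτ.le]
  exact strictMonoOn_bsCallTotalVol hS hK (mul_pos hs hr) (mul_pos ht hr)
    (mul_lt_mul_of_pos_right hst hr)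

theorem log_div_neg_of_lt (hS : 0 < S) (hSK : S < K) : log (S / K) < 0 :=
  log_neg (div_pos hS (hS.trans hSK)) ((div_lt_one (hS.trans hSK)).2 hSK)

theorem tendsto_bsCallTotalVol_nhdsGT_zero (hS : 0 < S) (hSK : S < K) :
    Tendsto (bsCallTotalVol S K) (𝓝[>] 0) (𝓝 0) := by
  have hlog : Tendsto (fun v : ℝ ↦ log (S / K) / v) (𝓝[>] 0) atBot :=
    tendsto_inv_nhdsGT_zero.const_mul_atTop_of_neg (log_div_neg_of_lt hS hSK)
  have hhalf : Tendsto (fun v : ℝ ↦ v / 2) (𝓝[>] 0) (𝓝 (0 / 2)) :=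
    tendsto_nhdsWithin_of_tendsto_nhds (tendsto_id.div_const 2)
  have hd₁ := (tendsto_stdNormalCDF_atBot.comp (hlog.atBot_add hhalf)).const_mul S
  have hd₂ := (tendsto_stdNormalCDF_atBot.comp (hlog.atBot_add hhalf.neg)).const_mul K
  simpa [Function.comp_def, bsCallTotalVol, sub_eq_add_neg] using! hd₁.sub hd₂

theorem bsCallTotalVol_nonneg (hS : 0 < S) (hSK : S < K) (hv : 0 < v) :
    0 ≤ bsCallTotalVol S K v := by
  refine le_of_tendsto (tendsto_bsCallTotalVol_nhdsGT_zero hS hSK) ?_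
  filter_upwards [Ioo_mem_nhdsGT hv] with w hw
  exact (strictMonoOn_bsCallTotalVol hS (hS.trans hSK) hw.1 hv hw.2).le

theorem bsCallTotalVol_le (hS : 0 < S) (hSK : S ≤ K) (hv : 0 < v) :
    bsCallTotalVol S K v ≤ √(S * K) * exp (-(log (S / K) ^ 2 / (2 * v ^ 2))) := by
  have hK := hS.trans_le hSK
  set l := log (S / K)
  have hl : l / v ≤ 0 := div_nonpos_of_nonpos_of_nonneg
    (log_nonpos (div_pos hS hK).le ((div_le_one hK).2 hSK)) hv.le
  calc bsCallTotalVol S K v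
      ≤ S * stdNormalCDF (l / v + v / 2) := sub_le_self _ (mul_nonneg hK.le (stdNormalCDF_nonneg _))
    _ ≤ S * exp (-(l / v) * (l / v + v / 2) + (l / v) ^ 2 / 2) := by
        gcongr
        -- the slope `l / v` in place of the optimal `d₁` avoids any condition on the sign of `d₁`
        exact stdNormalCDF_le_exp hl _
    _ = √(S * K) * exp (-(l ^ 2 / (2 * v ^ 2))) := by
        rw [← mul_exp_neg_half_log_div hS hK, mul_assoc, ← exp_add]
        congr 2
        field_simp
        ring

theorem le_bsCallTotalVol (hS : 0 < S) (hSK : S < K) (hw : 0 < w) (hwv : w ≤ v) :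
    (v - w) * (√(S * K) / √(2 * π) * exp (-(log (S / K) ^ 2 / (2 * w ^ 2)) - v ^ 2 / 8)) ≤
      bsCallTotalVol S K v := by
  have hderiv : ∀ u ∈ Icc w v, HasDerivAt (bsCallTotalVol S K) (bsVega S K u) u := fun u hu ↦
    hasDerivAt_bsCallTotalVol hS (hS.trans hSK) (hw.trans_le hu.1).ne'
  have hvega : ∀ u ∈ Icc w v,
      √(S * K) / √(2 * π) * exp (-(log (S / K) ^ 2 / (2 * w ^ 2)) - v ^ 2 / 8) ≤ bsVega S K u := by
    intro u ⟨hwu, huv⟩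
    have hu := hw.trans_le hwu
    unfold bsVega
    gcongr
  have hincr := (convex_Icc w v).mul_sub_le_image_sub_of_le_deriv
    (fun u hu ↦ (hderiv u hu).continuousAt.continuousWithinAt)
    (fun u hu ↦ (hderiv u (interior_subset hu)).differentiableAt.differentiableWithinAt)
    (fun u hu ↦ (hderiv u (interior_subset hu)).deriv ▸ hvega u (interior_subset hu))
    w (left_mem_Icc.2 hwv) v (right_mem_Icc.2 hwv) hwv
  linarith [bsCallTotalVol_nonneg hS hSK hw]

theorem bsCall_le (hS : 0 < S) (hSK : S ≤ K) (hα : 0 < α) (hτ : 0 < τ) :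
    bsCall S K τ α ≤ √(S * K) * exp (-(log (S / K) ^ 2 / (2 * α ^ 2)) / τ) := by
  rw [bsCall_eq_bsCallTotalVol hτ.le]
  refine (bsCallTotalVol_le hS hSK (mul_pos hα (sqrt_pos.2 hτ))).trans_eq ?_
  rw [mul_pow, sq_sqrt hτ.le, ← mul_assoc, ← div_div, neg_div]

-- The vega is integrated over the window `[α √τ (1 - τ), α √τ]` of total volatilities: narrow
-- enough not to change the rate, and wide enough for its width to be subexponential.
theorem le_bsCall (hS : 0 < S) (hSK : S < K) (hα : 0 < α) (hτ : 0 < τ) (hτ1 : τ < 1) :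
    τ * √τ * (α * (√(S * K) / √(2 * π))) *
      exp (-(log (S / K) ^ 2 / (2 * (α * (1 - τ)) ^ 2) + (α * τ) ^ 2 / 8) / τ) ≤
        bsCall S K τ α := by
  have h1τ := sub_pos.2 hτ1
  rw [bsCall_eq_bsCallTotalVol hτ.le]
  refine le_of_eq_of_le ?_ (le_bsCallTotalVol hS hSK (w := α * √τ * (1 - τ)) (by positivity)
    (mul_le_of_le_one_right (by positivity) (by linarith)))
  have hexponent : -(log (S / K) ^ 2 / (2 * (α * (1 - τ)) ^ 2) + (α * τ) ^ 2 / 8) / τ =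
      -(log (S / K) ^ 2 / (2 * (α * √τ * (1 - τ)) ^ 2)) - (α * √τ) ^ 2 / 8 := by
    simp only [mul_pow, sq_sqrt hτ.le]
    field_simp
    ring
  rw [hexponent]
  ring

theorem hasExpDecayRate_bsCall (hS : 0 < S) (hSK : S < K) (hα : 0 < α) :
    HasExpDecayRate (fun τ ↦ bsCall S K τ α) (log (S / K) ^ 2 / (2 * α ^ 2)) := by
  have hK := hS.trans hSK
  have hexponent : Tendsto
      (fun τ : ℝ ↦ log (S / K) ^ 2 / (2 * (α * (1 - τ)) ^ 2) + (α * τ) ^ 2 / 8) (𝓝[>] 0)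
      (𝓝 (log (S / K) ^ 2 / (2 * α ^ 2))) := by
    have hcont : ContinuousAt
        (fun τ : ℝ ↦ log (S / K) ^ 2 / (2 * (α * (1 - τ)) ^ 2) + (α * τ) ^ 2 / 8) 0 := by
      have : 2 * (α * (1 - 0)) ^ 2 ≠ 0 := by positivity
      fun_prop (disch := assumption)
    simpa using hcont.tendsto.mono_left nhdsWithin_le_nhds
  have hlower := ((HasExpDecayRate.id.mul HasExpDecayRate.id.sqrt).mul
    (.const (c := α * (√(S * K) / √(2 * π))) (by positivity))).mul (.exp_neg_div hexponent)
  have hupper := (HasExpDecayRate.const (c := √(S * K)) (by positivity)).mul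
    (.exp_neg_div (tendsto_const_nhds (x := log (S / K) ^ 2 / (2 * α ^ 2))))
  simp only [zero_div, zero_add, add_zero] at hlower hupper
  refine hlower.squeeze hupper ?_ ?_
  · filter_upwards [Ioo_mem_nhdsGT one_pos] with τ hτ using le_bsCall hS hSK hα hτ.1 hτ.2
  · filter_upwards [self_mem_nhdsWithin] with τ hτ using bsCall_le hS hSK.le hα hτ

section PCLVG

variable {σ₁ σ₂ : ℝ}

theorem tendsto_exp_neg_two_mul_div (hσ₁ : 0 < σ₁) {x : ℝ} (hx : 0 < x) :
    Tendsto (fun τ ↦ exp (-2 * x / (σ₁ * τ))) (𝓝[>] 0) (𝓝 0) := by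
  have hneg : -2 * x / σ₁ < 0 := div_neg_of_neg_of_pos (by linarith) hσ₁
  simpa only [Function.comp_def, ← div_eq_mul_inv, div_div] using
    tendsto_exp_atBot.comp (tendsto_inv_nhdsGT_zero.const_mul_atTop_of_neg hneg)

theorem tendsto_pclvgD (hσ₁ : 0 < σ₁) (σ₂ : ℝ) (hU : 0 < U) :
    Tendsto (pclvgD σ₁ σ₂ U) (𝓝[>] 0) (𝓝 (1 / σ₁ + 1 / σ₂)) := by
  simpa only [mul_zero, sub_zero] using! (tendsto_const_nhds (x := 1 / σ₁ + 1 / σ₂)).sub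
    ((tendsto_exp_neg_two_mul_div hσ₁ hU).const_mul (1 / σ₂ - 1 / σ₁))

theorem hasExpDecayRate_pclvg_otm (hσ₁ : 0 < σ₁) (hσ₂ : 0 < σ₂) (hU : 0 < U) {x : ℝ} (hx : 0 < x)
    (y σ : ℝ) :
    HasExpDecayRate (fun τ ↦ τ * exp (-y / (σ * τ)) * (1 - exp (-2 * x / (σ₁ * τ))) /
      pclvgD σ₁ σ₂ U τ) (y / σ) := by
  have hfactor : Tendsto (fun τ ↦ (1 - exp (-2 * x / (σ₁ * τ))) / pclvgD σ₁ σ₂ U τ) (𝓝[>] 0)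
      (𝓝 ((1 - 0) / (1 / σ₁ + 1 / σ₂))) :=
    (tendsto_const_nhds.sub (tendsto_exp_neg_two_mul_div hσ₁ hx)).div (tendsto_pclvgD hσ₁ σ₂ hU)
      (by positivity)
  have hprod := (HasExpDecayRate.id.mul (.exp_neg_div (tendsto_const_nhds (x := y / σ)))).mul
    (.of_tendsto_pos (by rw [sub_zero]; positivity) hfactor)
  simpa only [zero_add, add_zero, ← neg_div, div_div, ← mul_div_assoc] using hprod

theorem hasExpDecayRate_pclvgPut (hσ₁ : 0 < σ₁) (hσ₂ : 0 < σ₂) (hK : 0 < K) (hKU : K < U) :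
    HasExpDecayRate (pclvgPut σ₁ σ₂ U K) ((U - K) / σ₁) := by
  refine (hasExpDecayRate_pclvg_otm hσ₁ hσ₂ (hK.trans hKU) hK (U - K) σ₁).congr'
    (.of_forall fun τ ↦ ?_)
  simp only [pclvgPut, pclvgCall, if_pos hKU, add_sub_cancel_left]

theorem hasExpDecayRate_pclvgCall (hσ₁ : 0 < σ₁) (hσ₂ : 0 < σ₂) (hU : 0 < U) (hUK : U < K) :
    HasExpDecayRate (pclvgCall σ₁ σ₂ U K) ((K - U) / σ₂) := by
  refine (hasExpDecayRate_pclvg_otm hσ₁ hσ₂ hU hU (K - U) σ₂).congr' (.of_forall fun τ ↦ ?_)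
  simp only [pclvgCall, if_neg hUK.not_gt]

end PCLVG

/-- At small maturities, every volatility `s` that reproduces a call price of decay rate `r`, with
spot `S` and strike `K`, satisfies `P τ s`. Implied volatilities enter only through the equation
`bsCall S K τ s = f τ`, so their existence is not part of the notion. -/
def ImpliedVolEventually (S K r : ℝ) (P : ℝ → ℝ → Prop) : Prop :=
  ∀ f : ℝ → ℝ, HasExpDecayRate f r →
    ∀ᶠ τ in 𝓝[>] 0, ∀ s, 0 < s → bsCall S K τ s = f τ → P τ s

namespace ImpliedVolEventually

variable {r x : ℝ} {a b : ℝ → ℝ} {P : ℝ → ℝ → Prop}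

theorem le_of_rate_lt (hS : 0 < S) (hSK : S < K) (hα : 0 < α) (ha : ∀ᶠ τ in 𝓝[>] 0, α ≤ a τ)
    (hr : log (S / K) ^ 2 / (2 * α ^ 2) < r) : ImpliedVolEventually S K r fun τ s ↦ s ≤ a τ := by
  intro f hf
  filter_upwards [self_mem_nhdsWithin, ha, (hasExpDecayRate_bsCall hS hSK hα).eventually_lt hf hr]
    with τ hτ hατ hlt s hs heq
  have hsα : s < α := ((strictMonoOn_bsCall hS (hS.trans hSK) hτ).lt_iff_lt hs hα).1 (heq ▸ hlt)
  exact hsα.le.trans hατ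

theorem ge_of_lt_rate (hS : 0 < S) (hSK : S < K) (hα : 0 < α) (hb : ∀ᶠ τ in 𝓝[>] 0, b τ ≤ α)
    (hr : r < log (S / K) ^ 2 / (2 * α ^ 2)) : ImpliedVolEventually S K r fun τ s ↦ b τ ≤ s := by
  intro f hf
  filter_upwards [self_mem_nhdsWithin, hb, hf.eventually_lt (hasExpDecayRate_bsCall hS hSK hα) hr]
    with τ hτ hατ hlt s hs heq
  have hαs : α < s := ((strictMonoOn_bsCall hS (hS.trans hSK) hτ).lt_iff_lt hα hs).1 (heq ▸ hlt)
  exact hατ.trans hαs.le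

theorem le_of_small (hS : 0 < S) (hSK : S < K) (hx : 0 < x)
    (ha : ∃ α, 0 < α ∧ ∀ᶠ τ in 𝓝[>] 0, α ≤ a τ) :
    ∀ᶠ σ in 𝓝[>] 0, ImpliedVolEventually S K (x / σ) fun τ s ↦ s ≤ a τ := by
  obtain ⟨α, hα, haα⟩ := ha
  have hrate : Tendsto (fun σ : ℝ ↦ x / σ) (𝓝[>] 0) atTop :=
    tendsto_inv_nhdsGT_zero.const_mul_atTop hx
  exact (hrate.eventually_gt_atTop _).mono fun σ ↦ le_of_rate_lt hS hSK hα haα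

theorem ge_of_large (hS : 0 < S) (hSK : S < K) (x : ℝ)
    (hb : IsBoundedUnder (· ≤ ·) (𝓝[>] 0) b) :
    ∀ᶠ σ in atTop, ImpliedVolEventually S K (x / σ) fun τ s ↦ b τ ≤ s := by
  obtain ⟨β, hβ⟩ := hb.eventually_le
  have hα : 0 < max β 1 := lt_max_of_lt_right one_pos
  have hrate : Tendsto (fun σ : ℝ ↦ x / σ) atTop (𝓝 0) := tendsto_const_nhds.div_atTop tendsto_id
  have hpos : 0 < log (S / K) ^ 2 / (2 * max β 1 ^ 2) :=
    div_pos (sq_pos_of_neg (log_div_neg_of_lt hS hSK)) (by positivity)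
  exact (hrate.eventually_lt_const hpos).mono fun σ ↦
    ge_of_lt_rate hS hSK hα (hβ.mono fun τ ↦ le_max_of_le_left)

variable {σ₁ σ₂ : ℝ}

theorem pclvg_of_lt_barrier (hσ₁ : 0 < σ₁) (hσ₂ : 0 < σ₂) (hK : 0 < K) (hKU : K < U)
    (h : ImpliedVolEventually K U ((U - K) / σ₁) P) :
    ∀ᶠ τ in 𝓝[>] 0, ∀ s, 0 < s → bsCall U K τ s = pclvgCall σ₁ σ₂ U K τ → P τ s := by
  filter_upwards [self_mem_nhdsWithin, h _ (hasExpDecayRate_pclvgPut hσ₁ hσ₂ hK hKU)]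
    with τ hτ hP s hs heq
  refine hP s hs ?_
  rw [← bsPut_eq_bsCall_swap (le_of_lt hτ), bsPut, pclvgPut, heq]
  ring

theorem pclvg_of_barrier_lt (hσ₁ : 0 < σ₁) (hσ₂ : 0 < σ₂) (hU : 0 < U) (hUK : U < K)
    (h : ImpliedVolEventually U K ((K - U) / σ₂) P) :
    ∀ᶠ τ in 𝓝[>] 0, ∀ s, 0 < s → bsCall U K τ s = pclvgCall σ₁ σ₂ U K τ → P τ s :=
  h _ (hasExpDecayRate_pclvgCall hσ₁ hσ₂ hU hUK)

end ImpliedVolEventually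

theorem exists_pclvg_of_impliedVolEventually {ι : Type*} [Finite ι] {K : ι → ℝ}
    (hK : ∀ i, 0 < K i) (hU : 0 < U) {P Q : ι → ℝ → ℝ → Prop} {l₁ l₂ : Filter ℝ}
    [l₁.NeBot] [l₂.NeBot] (hl₁ : ∀ᶠ σ in l₁, 0 < σ) (hl₂ : ∀ᶠ σ in l₂, 0 < σ)
    (hP : ∀ i, K i < U → ∀ᶠ σ in l₁, ImpliedVolEventually (K i) U ((U - K i) / σ) (P i))
    (hQ : ∀ j, U < K j → ∀ᶠ σ in l₂, ImpliedVolEventually U (K j) ((K j - U) / σ) (Q j)) :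
    ∃ σ₁ σ₂ : ℝ, 0 < σ₁ ∧ 0 < σ₂ ∧ ∃ T : ℝ, 0 < T ∧ ∀ τ : ℝ, 0 < τ → τ ≤ T →
      (∀ i, K i < U → ∀ s : ℝ, 0 < s →
        bsCall U (K i) τ s = pclvgCall σ₁ σ₂ U (K i) τ → P i τ s) ∧
      (∀ j, U < K j → ∀ s : ℝ, 0 < s →
        bsCall U (K j) τ s = pclvgCall σ₁ σ₂ U (K j) τ → Q j τ s) := by
  obtain ⟨σ₁, hσ₁, hPσ₁⟩ := (hl₁.and (eventually_all.2 fun i ↦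
    eventually_imp_distrib_left.2 (hP i))).exists
  obtain ⟨σ₂, hσ₂, hQσ₂⟩ := (hl₂.and (eventually_all.2 fun j ↦
    eventually_imp_distrib_left.2 (hQ j))).exists
  have hbelow := eventually_all.2 fun i ↦ eventually_imp_distrib_left.2 fun hi ↦
    (hPσ₁ i hi).pclvg_of_lt_barrier hσ₁ hσ₂ (hK i) hi
  have habove := eventually_all.2 fun j ↦ eventually_imp_distrib_left.2 fun hj ↦
    (hQσ₂ j hj).pclvg_of_barrier_lt hσ₁ hσ₂ hU hj
  obtain ⟨T, hT, hprices⟩ := (nhdsGT_basis_Ioc (0 : ℝ)).eventually_iff.1 (hbelow.and habove)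
  exact ⟨σ₁, σ₂, hσ₁, hσ₂, T, hT, fun τ hτ0 hτT ↦ hprices ⟨hτ0, hτT⟩⟩

theorem exists_dominating_pclvg_surfaces_general {ι : Type*} [Finite ι] (K : ι → ℝ)
    (hKpos : ∀ j, 0 < K j) (U : ℝ) (hU : 0 < U) (a b : ι → ℝ → ℝ)
    (ha : ∀ j, ∃ α, 0 < α ∧ ∀ᶠ τ in 𝓝[>] 0, α ≤ a j τ)
    (hb : ∀ j, IsBoundedUnder (· ≤ ·) (𝓝[>] 0) (b j)) :
    (∃ σu1 σu2 : ℝ, 0 < σu1 ∧ 0 < σu2 ∧ ∃ T : ℝ, 0 < T ∧ ∀ τ : ℝ, 0 < τ → τ ≤ T →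
      (∀ i, K i < U → ∀ s : ℝ, 0 < s →
        bsCall U (K i) τ s = pclvgCall σu1 σu2 U (K i) τ → s ≤ a i τ) ∧
      (∀ j, U < K j → ∀ s : ℝ, 0 < s →
        bsCall U (K j) τ s = pclvgCall σu1 σu2 U (K j) τ → b j τ ≤ s)) ∧
    (∃ σl1 σl2 : ℝ, 0 < σl1 ∧ 0 < σl2 ∧ ∃ T : ℝ, 0 < T ∧ ∀ τ : ℝ, 0 < τ → τ ≤ T →
      (∀ i, K i < U → ∀ s : ℝ, 0 < s →
        bsCall U (K i) τ s = pclvgCall σl1 σl2 U (K i) τ → b i τ ≤ s) ∧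
      (∀ j, U < K j → ∀ s : ℝ, 0 < s →
        bsCall U (K j) τ s = pclvgCall σl1 σl2 U (K j) τ → s ≤ a j τ)) := by
  have hsmall : ∀ᶠ σ : ℝ in 𝓝[>] 0, 0 < σ := self_mem_nhdsWithin
  have hlarge : ∀ᶠ σ : ℝ in atTop, 0 < σ := eventually_gt_atTop 0
  exact ⟨exists_pclvg_of_impliedVolEventually hKpos hU hsmall hlarge
      (fun i hi ↦ ImpliedVolEventually.le_of_small (hKpos i) hi (sub_pos.2 hi) (ha i))
      (fun j hj ↦ ImpliedVolEventually.ge_of_large hU hj _ (hb j)),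
    exists_pclvg_of_impliedVolEventually hKpos hU hlarge hsmall
      (fun i hi ↦ ImpliedVolEventually.ge_of_large (hKpos i) hi _ (hb i))
      (fun j hj ↦ ImpliedVolEventually.le_of_small hU hj (sub_pos.2 hj) (ha j))⟩

end

/-- Existence of upper and lower dominating PCLVG implied volatility surfaces
for any beliefs given by input functions `a_j, b_j` with strictly positive short-term limits,
provided the barrier `U` does not coincide with any strike. -/
theorem exists_dominating_pclvg_surfaces (n : ℕ) (K : Fin n → ℝ)
    (hKpos : ∀ j, 0 < K j) (hKmono : StrictMono K)
    (U : ℝ) (hU : 0 < U) (hUK : ∀ j, U ≠ K j)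
    (a b : Fin n → ℝ → ℝ)
    (hapos : ∀ j τ, 0 < τ → 0 < a j τ) (hbpos : ∀ j τ, 0 < τ → 0 < b j τ)
    (halim : ∀ j, ∃ L : ℝ, 0 < L ∧
      Filter.Tendsto (a j) (nhdsWithin 0 (Set.Ioi 0)) (nhds L))
    (hblim : ∀ j, ∃ L : ℝ, 0 < L ∧
      Filter.Tendsto (b j) (nhdsWithin 0 (Set.Ioi 0)) (nhds L)) :
    (∃ σu1 σu2 : ℝ, 0 < σu1 ∧ 0 < σu2 ∧ ∃ T : ℝ, 0 < T ∧
      ∀ τ : ℝ, 0 < τ → τ ≤ T →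
        (∀ i, K i < U → ∀ s : ℝ, 0 < s →
          bsCall U (K i) τ s = pclvgCall σu1 σu2 U (K i) τ → s ≤ a i τ) ∧
        (∀ j, U < K j → ∀ s : ℝ, 0 < s →
          bsCall U (K j) τ s = pclvgCall σu1 σu2 U (K j) τ → b j τ ≤ s)) ∧
    (∃ σl1 σl2 : ℝ, 0 < σl1 ∧ 0 < σl2 ∧ ∃ T : ℝ, 0 < T ∧
      ∀ τ : ℝ, 0 < τ → τ ≤ T →
        (∀ i, K i < U → ∀ s : ℝ, 0 < s →
          bsCall U (K i) τ s = pclvgCall σl1 σl2 U (K i) τ → b i τ ≤ s) ∧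
        (∀ j, U < K j → ∀ s : ℝ, 0 < s →
          bsCall U (K j) τ s = pclvgCall σl1 σl2 U (K j) τ → s ≤ a j τ)) :=
  exists_dominating_pclvg_surfaces_general K hKpos U hU a b
    (fun j ↦ let ⟨L, hL, hlim⟩ := halim j
      ⟨L / 2, half_pos hL, hlim.eventually_const_le (half_lt_self hL)⟩)
    (fun j ↦ let ⟨_, _, hlim⟩ := hblim j; hlim.isBoundedUnder_le)
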